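/- Let V be a 2n-dimensional symplectic space, x a self-adjoint endomorphism with x² = 0 of Jordan type (2^{2n₂} 1^{2n₁}), and suppose F, F' are k-dimensional isotropic subspaces of ker(x) with dim(F ∩ Im(x)) = k₂+1, dim(F ∩ x(F^⊥)) = k₂−2h−1 and the parameter set X(k₂,h) (subspaces with intersection dimensions k₂ and k₂−2h) is nonempty. Then every F with parameters (k₂+1, h+1) lies in the Zariski closure of the set of subspaces with parameters (k₂, h). -/

import Mathlib

open Module Submodule LinearMap

noncomputable section

variable {V : Type*} [AddCommGroup V] [Module ℂ V]

/-- Perpendicular of a subspace with respect to a bilinear form. -/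
def perp (B : V →ₗ[ℂ] V →ₗ[ℂ] ℂ) (W : Submodule ℂ V) : Submodule ℂ V where
  carrier := {v | ∀ w ∈ W, B v w = 0}
  add_mem' := by
    intro a b ha hb w hw
    simp [map_add, ha w hw, hb w hw]
  zero_mem' := by intro w hw; simp
  smul_mem' := by
    intro c a ha w hw
    simp [map_smul, ha w hw]

@[simp] lemma mem_perp {B : V →ₗ[ℂ] V →ₗ[ℂ] ℂ} {W : Submodule ℂ V} {v : V} :
    v ∈ perp B W ↔ ∀ w ∈ W, B v w = 0 := Iff.rfl

/-- The subquotient W/U for U ≤ W. -/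
abbrev SubQuot (W U : Submodule ℂ V) : Type _ := W ⧸ (U.comap W.subtype)

/-- The endomorphism induced on the subquotient W/U by x. -/
def subQuotMap (x : V →ₗ[ℂ] V) (W U : Submodule ℂ V)
    (hW : ∀ v ∈ W, x v ∈ W) (hU : ∀ v ∈ U, x v ∈ U) :
    SubQuot W U →ₗ[ℂ] SubQuot W U :=
  Submodule.mapQ _ _ (x.restrict hW) (by
    intro a ha
    simp only [Submodule.mem_comap, LinearMap.restrict_apply, Submodule.coe_subtype] at ha ⊢
    exact hU a.1 ha)

/-- The Zariski topology on a complex vector space. -/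
def zariski (M : Type*) [AddCommGroup M] [Module ℂ M] : TopologicalSpace M :=
  TopologicalSpace.generateFrom
    {U | ∃ f : M → ℂ,
      f ∈ Algebra.adjoin ℂ {g : M → ℂ | ∃ φ : M →ₗ[ℂ] ℂ, g = ⇑φ} ∧ U = {x | f x ≠ 0}}

/-- The Grassmannian of k-dimensional subspaces of M. -/
def Grass (M : Type*) [AddCommGroup M] [Module ℂ M] (k : ℕ) : Type _ :=
  {F : Submodule ℂ M // finrank ℂ F = k}

/-- The Zariski topology on the Grassmannian, coinduced from the space of
linearly independent k-tuples with its Zariski topology. -/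
instance grassTopology (M : Type*) [AddCommGroup M] [Module ℂ M] (k : ℕ) :
    TopologicalSpace (Grass M k) :=
  TopologicalSpace.coinduced
    (fun v : {v : Fin k → M // LinearIndependent ℂ v} =>
      (⟨Submodule.span ℂ (Set.range v.1),
        (finrank_span_eq_card v.2).trans (by simp)⟩ : Grass M k))
    (TopologicalSpace.induced Subtype.val (zariski (Fin k → M)))

end

/-- The locally closed piece X(k₂,h) of the isotropic Grassmannian of k-dimensional
isotropic subspaces F of ker x with dim(F ∩ Im x) = k₂ and dim(F ∩ x(F^⊥)) = k₂ − 2h,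
viewed inside the Grassmannian of k-dimensional subspaces of V. -/
def Xpiece {V : Type*} [AddCommGroup V] [Module ℂ V]
    (B : V →ₗ[ℂ] V →ₗ[ℂ] ℂ) (x : V →ₗ[ℂ] V) (k k₂ h : ℕ) : Set (Grass V k) :=
  {F | F.1 ≤ LinearMap.ker x ∧ F.1 ≤ perp B F.1 ∧
    finrank ℂ ↥(F.1 ⊓ LinearMap.range x) = k₂ ∧
    finrank ℂ ↥(F.1 ⊓ (perp B F.1).map x) + 2 * h = k₂}

open Polynomial in
lemma aux_poly {M : Type*} [AddCommGroup M] [Module ℂ M] (v w : M) (f : M → ℂ)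
    (hf : f ∈ Algebra.adjoin ℂ {g : M → ℂ | ∃ φ : M →ₗ[ℂ] ℂ, g = ⇑φ}) :
    ∃ p : ℂ[X], ∀ t : ℂ, f (v + t • w) = p.eval t := by
  induction hf using Algebra.adjoin_induction with
  | mem g hg =>
    obtain ⟨φ, rfl⟩ := hg
    exact ⟨C (φ v) + X * C (φ w), fun t => by simp; ring⟩
  | algebraMap r => exact ⟨C r, fun t => by simp⟩
  | add f g _ _ hf hg =>
    obtain ⟨p, hp⟩ := hf
    obtain ⟨q, hq⟩ := hg
    exact ⟨p + q, fun t => by simp [hp, hq]⟩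
  | mul f g _ _ hf hg =>
    obtain ⟨p, hp⟩ := hf
    obtain ⟨q, hq⟩ := hg
    exact ⟨p * q, fun t => by simp [hp, hq]⟩

lemma aux_open {M : Type*} [AddCommGroup M] [Module ℂ M] (v w : M) (O : Set M)
    (hO : @IsOpen M (zariski M) O) (hv : v ∈ O) : {t : ℂ | v + t • w ∉ O}.Finite := by
  change TopologicalSpace.GenerateOpen _ O at hO
  induction hO with
  | basic U hU =>
    obtain ⟨f, hf, rfl⟩ := hU
    obtain ⟨p, hp⟩ := aux_poly v w f hf
    have hp0 : p ≠ 0 := by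
      rintro rfl
      apply hv
      simpa using hp 0
    refine (p.roots.toFinset.finite_toSet).subset ?_
    intro t ht
    simp only [Set.mem_ofPred_eq, not_not, hp] at ht
    simp [hp0, ht]
  | univ => simp
  | inter A C _ _ hA hC =>
    refine ((hA hv.1).union (hC hv.2)).subset ?_
    intro t ht
    by_contra hc
    simp only [Set.mem_union, Set.mem_ofPred_eq, not_or, not_not] at hc
    exact ht hc
  | sUnion S _ ih =>
    obtain ⟨U, hU, hvU⟩ := hv
    exact (ih U hU hvU).subset fun t ht hc => ht ⟨U, hU, hc⟩


lemma aux_sup {V : Type*} [AddCommGroup V] [Module ℂ V] [FiniteDimensional ℂ V]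
    (S : Submodule ℂ V) (z : V) (hz : z ∉ S) :
    finrank ℂ ↥(S ⊔ span ℂ {z}) = finrank ℂ S + 1 := by
  exact Submodule.finrank_sup_span_singleton hz

lemma aux_inj {V : Type*} [AddCommGroup V] [Module ℂ V] [FiniteDimensional ℂ V]
    (B : V →ₗ[ℂ] V →ₗ[ℂ] ℂ) (hnondeg : ∀ v : V, (∀ w : V, B v w = 0) → v = 0)
    : Function.Injective B := by
  rw [injective_iff_map_eq_zero]
  intro a ha
  exact hnondeg a fun w => by simp [ha]

lemma aux_surj {V : Type*} [AddCommGroup V] [Module ℂ V] [FiniteDimensional ℂ V]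
    (B : V →ₗ[ℂ] V →ₗ[ℂ] ℂ) (hnondeg : ∀ v : V, (∀ w : V, B v w = 0) → v = 0)
    (φ : V →ₗ[ℂ] ℂ) : ∃ a, B a = φ := by
  have : finrank ℂ V = finrank ℂ (V →ₗ[ℂ] ℂ) := (Subspace.dual_finrank_eq (K := ℂ) (V := V)).symm
  exact (LinearMap.injective_iff_surjective_of_finrank_eq_finrank this).1 (aux_inj B hnondeg) φ

lemma aux_finrank_perp {V : Type*} [AddCommGroup V] [Module ℂ V] [FiniteDimensional ℂ V]
    (B : V →ₗ[ℂ] V →ₗ[ℂ] ℂ) (hnondeg : ∀ v : V, (∀ w : V, B v w = 0) → v = 0)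
    (W : Submodule ℂ V) :
    finrank ℂ W + finrank ℂ (perp B W) = finrank ℂ V := by
  rw [← Subspace.finrank_add_finrank_dualAnnihilator_eq W]
  congr 1
  have e : (perp B W).map B = W.dualAnnihilator := by
    ext φ
    simp only [Submodule.mem_map, mem_perp, Submodule.mem_dualAnnihilator]
    constructor
    · rintro ⟨a, ha, rfl⟩; exact ha
    · intro h
      obtain ⟨a, rfl⟩ := aux_surj B hnondeg φ
      exact ⟨a, h, rfl⟩
  rw [← e]
  exact (Submodule.equivMapOfInjective B (aux_inj B hnondeg) _).finrank_eq


lemma aux_ker {V : Type*} [AddCommGroup V] [Module ℂ V] [FiniteDimensional ℂ V]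
    (B : V →ₗ[ℂ] V →ₗ[ℂ] ℂ) (hnondeg : ∀ v : V, (∀ w : V, B v w = 0) → v = 0)
    (x : V →ₗ[ℂ] V) (hsa : ∀ v w : V, B (x v) w = B v (x w))
    (c : V) (hc : ∀ w ∈ LinearMap.range x, B c w = 0) : x c = 0 := by
  apply hnondeg
  intro w
  rw [hsa]
  exact hc _ ⟨w, rfl⟩

lemma aux_map {V : Type*} [AddCommGroup V] [Module ℂ V] [FiniteDimensional ℂ V]
    (B : V →ₗ[ℂ] V →ₗ[ℂ] ℂ) (hnondeg : ∀ v : V, (∀ w : V, B v w = 0) → v = 0)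
    (x : V →ₗ[ℂ] V) (hsa : ∀ v w : V, B (x v) w = B v (x w))
    (F : Submodule ℂ V) :
    (perp B F).map x = (perp B (F ⊓ LinearMap.range x)).map x := by
  apply le_antisymm
  · apply Submodule.map_mono
    intro v hv w hw
    exact hv w hw.1
  · rintro _ ⟨a, ha, rfl⟩
    have h : B a ∈ (F ⊓ LinearMap.range x).dualAnnihilator := by
      rw [Submodule.mem_dualAnnihilator]; exact ha
    rw [Subspace.dualAnnihilator_inf_eq, Submodule.mem_sup] at h
    obtain ⟨φ, hφ, ψ, hψ, hs⟩ := h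
    obtain ⟨a', rfl⟩ := aux_surj B hnondeg φ
    obtain ⟨c, rfl⟩ := aux_surj B hnondeg ψ
    rw [Submodule.mem_dualAnnihilator] at hφ hψ
    have hc := aux_ker B hnondeg x hsa c hψ
    have : a' + c = a := aux_inj B hnondeg (by rw [map_add, hs])
    exact ⟨a', hφ, by rw [← this, map_add, hc, add_zero]⟩

lemma aux_inf {V : Type*} [AddCommGroup V] [Module ℂ V] [FiniteDimensional ℂ V]
    (B : V →ₗ[ℂ] V →ₗ[ℂ] ℂ) (hnondeg : ∀ v : V, (∀ w : V, B v w = 0) → v = 0)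
    (x : V →ₗ[ℂ] V) (hsa : ∀ v w : V, B (x v) w = B v (x w))
    (F : Submodule ℂ V) :
    F ⊓ (perp B F).map x =
      (F ⊓ LinearMap.range x) ⊓ (perp B (F ⊓ LinearMap.range x)).map x := by
  rw [← aux_map B hnondeg x hsa, inf_assoc]
  congr 1
  rw [eq_comm, inf_eq_right]
  rintro _ ⟨a, _, rfl⟩
  exact ⟨a, rfl⟩

lemma aux_dec {V : Type*} [AddCommGroup V] [Module ℂ V] (B : V →ₗ[ℂ] V →ₗ[ℂ] ℂ)
    (D : Submodule ℂ V) (a e d : V) (he : e ∈ D) (hae : B a e ≠ 0) (hd : d ∈ D) :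
    d - (B a d / B a e) • e ∈ D ⊓ LinearMap.ker (B a) := by
  refine ⟨D.sub_mem hd (D.smul_mem _ he), ?_⟩
  change B a _ = 0
  rw [map_sub, map_smul, smul_eq_mul, div_mul_cancel₀ _ hae, sub_self]

lemma aux_H {V : Type*} [AddCommGroup V] [Module ℂ V] [FiniteDimensional ℂ V]
    (B : V →ₗ[ℂ] V →ₗ[ℂ] ℂ) (D : Submodule ℂ V) (a e : V) (he : e ∈ D) (hae : B a e ≠ 0) :
    finrank ℂ ↥(D ⊓ LinearMap.ker (B a)) + 1 = finrank ℂ D := by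
  rw [← aux_sup (D ⊓ LinearMap.ker (B a)) e (fun h => hae h.2)]
  have : D ⊓ LinearMap.ker (B a) ⊔ span ℂ {e} = D := by
    apply le_antisymm
    · refine sup_le inf_le_left ?_
      rw [Submodule.span_singleton_le_iff_mem]
      exact he
    · intro d hd
      exact Submodule.mem_sup.2 ⟨_, aux_dec B D a e d he hae hd, (B a d / B a e) • e,
        Submodule.smul_mem _ _ (Submodule.mem_span_singleton_self e), by simp⟩
  rw [this]

lemma aux_rad {V : Type*} [AddCommGroup V] [Module ℂ V]
    (B : V →ₗ[ℂ] V →ₗ[ℂ] ℂ) (hskew : ∀ v w : V, B w v = - B v w)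
    (x : V →ₗ[ℂ] V) (hsa : ∀ v w : V, B (x v) w = B v (x w))
    (D : Submodule ℂ V) (a e : V) (ha : x a ∈ D) (he : e ∈ D) (hae : B a e ≠ 0) :
    (D ⊓ LinearMap.ker (B a)) ⊓ (perp B (D ⊓ LinearMap.ker (B a))).map x =
      (D ⊓ (perp B D).map x) ⊔ span ℂ {x a} := by
  apply le_antisymm
  · rintro _ ⟨⟨hyD, hya⟩, v, hv, rfl⟩
    have hv' : ∀ d ∈ D, B v d = B v e / B a e * B a d := by
      intro d hd
      have := hv _ (aux_dec B D a e d he hae hd)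
      rw [map_sub, map_smul, smul_eq_mul, sub_eq_zero] at this
      rw [this]; ring
    refine Submodule.mem_sup.2 ⟨x (v - (B v e / B a e) • a), ⟨?_, _, ?_, rfl⟩,
      (B v e / B a e) • x a, Submodule.smul_mem _ _ (Submodule.mem_span_singleton_self _), ?_⟩
    · rw [map_sub, map_smul]
      exact D.sub_mem hyD (D.smul_mem _ ha)
    · intro d hd
      simp [hv' d hd]
    · simp
  · refine sup_le ?_ ?_
    · rintro _ ⟨hyD, v, hv, rfl⟩
      refine ⟨⟨hyD, ?_⟩, v, fun w hw => hv w hw.1, rfl⟩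
      change B a _ = 0
      rw [← hsa, hskew, hv _ ha, neg_zero]
    · rw [Submodule.span_singleton_le_iff_mem]
      refine ⟨⟨ha, ?_⟩, a, fun w hw => hw.2, rfl⟩
      change B a _ = 0
      have h1 := hsa a a
      have h2 := hskew a (x a)
      have : (2 : ℂ) * B a (x a) = 0 := by linear_combination h2 - h1
      simpa using this

/-- for self-adjoint x with x² = 0 of Jordan type (2^{2n₂} 1^{2n₁}), if
X(k₂,h) and X(k₂+1,h+1) are both nonempty then X(k₂+1,h+1) lies in the Zariski closure
of X(k₂,h). -/
theorem stmt18 (V : Type*) [AddCommGroup V] [Module ℂ V] [FiniteDimensional ℂ V]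
    (B : V →ₗ[ℂ] V →ₗ[ℂ] ℂ) (hskew : ∀ v w : V, B w v = - B v w)
    (hnondeg : ∀ v : V, (∀ w : V, B v w = 0) → v = 0)
    (x : V →ₗ[ℂ] V) (hsa : ∀ v w : V, B (x v) w = B v (x w)) (hx2 : x ∘ₗ x = 0)
    (n n₁ n₂ : ℕ) (hdim : finrank ℂ V = 2 * n) (hn : n = 2 * n₂ + n₁)
    (hrank : finrank ℂ ↥(LinearMap.range x) = 2 * n₂)
    (k k₂ h : ℕ)
    (h1 : (Xpiece B x k k₂ h).Nonempty)
    (h2 : (Xpiece B x k (k₂ + 1) (h + 1)).Nonempty) :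
    Xpiece B x k (k₂ + 1) (h + 1) ⊆ closure (Xpiece B x k k₂ h) := by
  rintro ⟨F, hFk⟩ ⟨hFK, hFiso, hF2, hFh⟩
  obtain ⟨⟨F', hFk'⟩, hFK', hFiso', hF2', -⟩ := h1
  dsimp only at hFK hFiso hF2 hFh hFK' hFiso' hF2'
  have hx2' : ∀ v, x (x v) = 0 := fun v => by
    rw [← LinearMap.comp_apply, hx2, LinearMap.zero_apply]
  have hRK : LinearMap.range x ≤ LinearMap.ker x := by
    rintro _ ⟨v, rfl⟩; exact hx2' v
  have hKR : ∀ v ∈ LinearMap.ker x, ∀ w ∈ LinearMap.range x, B v w = 0 := by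
    rintro v hv _ ⟨w, rfl⟩
    rw [← hsa, LinearMap.mem_ker.1 hv]; simp
  -- the vector u
  obtain ⟨u, hu, huF⟩ : ∃ u ∈ perp B (F ⊔ LinearMap.range x), u ∉ F ⊔ LinearMap.range x := by
    by_contra hcon
    have hle : perp B (F ⊔ LinearMap.range x) ≤ F ⊔ LinearMap.range x := by
      intro u hu
      by_contra h
      exact hcon ⟨u, hu, h⟩
    have hle' : F' ⊔ LinearMap.range x ≤ perp B (F' ⊔ LinearMap.range x) := by
      intro v hv w hw
      obtain ⟨v1, hv1, v2, hv2, rfl⟩ := Submodule.mem_sup.1 hv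
      obtain ⟨w1, hw1, w2, hw2, rfl⟩ := Submodule.mem_sup.1 hw
      have e1 := hFiso' hv1 w1 hw1
      have e2 := hKR v1 (hFK' hv1) w2 hw2
      have e3 := hKR w1 (hFK' hw1) v2 hv2
      have e4 := hKR v2 (hRK hv2) w2 hw2
      have e5 : B v2 w1 = 0 := by rw [hskew, e3, neg_zero]
      simp [e1, e2, e4, e5]
    have a1 := Submodule.finrank_mono hle
    have a2 := Submodule.finrank_mono hle'
    have a3 := aux_finrank_perp B hnondeg (F ⊔ LinearMap.range x)
    have a4 := aux_finrank_perp B hnondeg (F' ⊔ LinearMap.range x)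
    have a5 := Submodule.finrank_sup_add_finrank_inf_eq F (LinearMap.range x)
    have a6 := Submodule.finrank_sup_add_finrank_inf_eq F' (LinearMap.range x)
    omega
  have huK : x u = 0 := aux_ker B hnondeg x hsa u
    fun w hw => hu w (Submodule.mem_sup_right hw)
  have huF' : ∀ f ∈ F, B u f = 0 := fun f hf => hu f (Submodule.mem_sup_left hf)
  have huu : B u u = 0 := by
    have h2 := hskew u u
    have : (2 : ℂ) * B u u = 0 := by linear_combination h2
    simpa using this
  -- the vectors a, e
  rw [aux_inf B hnondeg x hsa] at hFh
  obtain ⟨a, haD, haS⟩ : ∃ a, x a ∈ F ⊓ LinearMap.range x ∧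
      x a ∉ (perp B (F ⊓ LinearMap.range x)).map x := by
    by_contra hcon
    have hle : F ⊓ LinearMap.range x ≤ (perp B (F ⊓ LinearMap.range x)).map x := by
      rintro y hy
      obtain ⟨a, rfl⟩ := hy.2
      by_contra h
      exact hcon ⟨a, hy, h⟩
    rw [inf_eq_left.2 hle] at hFh
    omega
  obtain ⟨e, heD, hae⟩ : ∃ e ∈ F ⊓ LinearMap.range x, B a e ≠ 0 := by
    by_contra hcon
    apply haS
    refine ⟨a, fun w hw => ?_, rfl⟩
    by_contra h
    exact hcon ⟨w, hw, h⟩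
  have hH := aux_H B (F ⊓ LinearMap.range x) a e heD hae
  have hrad := aux_rad B hskew x hsa (F ⊓ LinearMap.range x) a e haD heD hae
  have hradk := aux_sup (F ⊓ LinearMap.range x ⊓ (perp B (F ⊓ LinearMap.range x)).map x) (x a)
    (fun h => haS h.2)
  rw [← hrad] at hradk
  -- the family
  have huF0 : u ∉ F := fun h => huF (Submodule.mem_sup_left h)
  obtain ⟨b⟩ : Nonempty (Basis (Fin k) ℂ F) := ⟨finBasisOfFinrankEq ℂ F hFk⟩
  let g : ℂ → V →ₗ[ℂ] V := fun t => LinearMap.id + t • (B a).smulRight u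
  have hg : ∀ t f, g t f = f + (t * B a f) • u := fun t f => by
    simp [g, mul_smul]
  let v0 : Fin k → V := fun i => b i
  let w : Fin k → V := fun i => B a (b i) • u
  have hvw : ∀ t : ℂ, v0 + t • w = fun i => g t (b i) := by
    intro t; ext i; simp [hg, v0, w, mul_smul]
  have hginj : ∀ t, Function.Injective ((g t).domRestrict F) := by
    intro t
    rw [injective_iff_map_eq_zero]
    rintro ⟨f, hf⟩ h0
    rw [LinearMap.domRestrict_apply, hg] at h0
    by_cases hc : t * B a f = 0
    · rw [hc, zero_smul, add_zero] at h0
      exact Subtype.ext h0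
    · exfalso
      apply huF0
      rw [← Submodule.smul_mem_iff F hc, ← neg_eq_of_add_eq_zero_right h0]
      exact F.neg_mem hf
  have hli : ∀ t : ℂ, LinearIndependent ℂ (v0 + t • w) := by
    intro t
    rw [hvw]
    exact b.linearIndependent.map' ((g t).domRestrict F) (LinearMap.ker_eq_bot.2 (hginj t))
  have hspan : ∀ t : ℂ, span ℂ (Set.range (v0 + t • w)) = F.map (g t) := by
    intro t
    have e1 : Set.range (v0 + t • w) = ((g t).domRestrict F) '' Set.range b := by
      rw [hvw, ← Set.range_comp]; rfl
    rw [e1, Submodule.span_image, b.span_eq, Submodule.map_top, LinearMap.range_domRestrict]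
  refine _root_.mem_closure_iff.2 ?_
  intro o ho hFo
  have hcongr : ∀ A C : Grass V k, A.1 = C.1 → (A ∈ o ↔ C ∈ o) := by
    intro A C h
    have hAC : A = C := Subtype.ext h
    rw [hAC]
  obtain ⟨O, hO, hOo⟩ := (@isOpen_induced_iff _ _ (zariski (Fin k → V)) _ _).1
    (isOpen_coinduced.1 ho)
  have key : ∀ t : ℂ, v0 + t • w ∈ O ↔
      (⟨F.map (g t), by rw [← hspan]; exact (finrank_span_eq_card (hli t)).trans (by simp)⟩ :
        Grass V k) ∈ o := by
    intro t
    have h3 := Set.ext_iff.1 hOo ⟨v0 + t • w, hli t⟩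
    refine Iff.trans h3 ?_
    exact hcongr _ _ (hspan t)
  have h0 : v0 ∈ O := by
    have := (key 0).2 ((hcongr _ ⟨F, hFk⟩ (by simp [g])).2 hFo)
    simpa using this
  have hfin := aux_open v0 w O hO h0
  obtain ⟨t, ht⟩ := (hfin.union (Set.finite_singleton (0 : ℂ))).infinite_compl.nonempty
  simp only [Set.mem_compl_iff, Set.mem_union, Set.mem_ofPred_eq, not_or, not_not,
    Set.mem_singleton_iff] at ht
  obtain ⟨htO, ht0⟩ := ht
  refine ⟨_, (key t).1 htO, ?_⟩
  have hint : F.map (g t) ⊓ LinearMap.range x =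
      F ⊓ LinearMap.range x ⊓ LinearMap.ker (B a) := by
    apply le_antisymm
    · rintro _ ⟨⟨f, hf, rfl⟩, hR⟩
      rw [hg] at hR ⊢
      have hc : B a f = 0 := by
        by_contra hc
        apply huF
        rw [← Submodule.smul_mem_iff _ (mul_ne_zero ht0 hc)]
        have : (t * B a f) • u = -f + (f + (t * B a f) • u) := by abel
        rw [this]
        exact Submodule.add_mem_sup (F.neg_mem hf) hR
      rw [hc, mul_zero, zero_smul, add_zero] at hR ⊢
      exact ⟨⟨hf, hR⟩, hc⟩
    · rintro f ⟨⟨hf, hR⟩, hc⟩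
      exact ⟨⟨f, hf, by rw [hg, LinearMap.mem_ker.1 hc]; simp⟩, hR⟩
  refine ⟨?_, ?_, ?_, ?_⟩
  · rintro _ ⟨f, hf, rfl⟩
    rw [LinearMap.mem_ker, hg, map_add, map_smul, huK, LinearMap.mem_ker.1 (hFK hf)]
    simp
  · rintro _ ⟨f, hf, rfl⟩ _ ⟨f', hf', rfl⟩
    have e1 := hFiso hf f' hf'
    have e2 := huF' f' hf'
    have e3 : B f u = 0 := by rw [hskew, huF' f hf, neg_zero]
    simp [hg, e1, e2, e3, huu]
  · dsimp only
    rw [hint]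
    omega
  · dsimp only
    rw [aux_inf B hnondeg x hsa, hint]
    omega
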